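/- If q belongs to the class E, then S_j(n,q) = O(1/n) as n → ∞ for j = 2, 3, 4, where (all sums being over pairs (k,l) ∈ ℤ² with k ∉ {0, −2n} and k + l ∉ {0, −2n}): S_2(n,q) = Σ C_k C_l C_{−k−l} / ( (2n+k)(k+l) ), S_3(n,q) = Σ C_k C_l C_{−k−l} / ( k(2n+k+l) ), and S_4(n,q) = Σ C_k C_l C_{−k−l} / ( (2n+k)(2n+k+l) ). -/

import Mathlib

open MeasureTheory Filter Asymptotics

/-- Cosine Fourier coefficients `C_k = (1/π) ∫₀^π q(x) cos(kx) dx`. -/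
noncomputable def cosCoef (q : ℝ → ℂ) (k : ℤ) : ℂ :=
  (1 / (Real.pi : ℂ)) * ∫ x in (0:ℝ)..Real.pi, q x * Real.cos ((k : ℝ) * x)

/-- The restriction set for the sums `S_j(n,q)`: pairs `(k,l)` with `k ∉ {0, −2n}` and
`k+l ∉ {0, −2n}`. -/
def Sadm (n : ℕ) (kl : ℤ × ℤ) : Prop :=
  kl.1 ≠ 0 ∧ kl.1 ≠ -(2 * (n : ℤ)) ∧ kl.1 + kl.2 ≠ 0 ∧ kl.1 + kl.2 ≠ -(2 * (n : ℤ))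

instance (n : ℕ) (kl : ℤ × ℤ) : Decidable (Sadm n kl) := by unfold Sadm; infer_instance

/-- `S₂(n,q) = Σ C_k C_l C_{−k−l} / ((2n+k)(k+l))`. -/
noncomputable def S2sum (q : ℝ → ℂ) (n : ℕ) : ℂ :=
  ∑' kl : ℤ × ℤ, if Sadm n kl then
    cosCoef q kl.1 * cosCoef q kl.2 * cosCoef q (-(kl.1 + kl.2)) /
      ((2 * (n : ℂ) + (kl.1 : ℂ)) * ((kl.1 : ℂ) + (kl.2 : ℂ)))
  else 0

/-- `S₃(n,q) = Σ C_k C_l C_{−k−l} / (k(2n+k+l))`. -/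
noncomputable def S3sum (q : ℝ → ℂ) (n : ℕ) : ℂ :=
  ∑' kl : ℤ × ℤ, if Sadm n kl then
    cosCoef q kl.1 * cosCoef q kl.2 * cosCoef q (-(kl.1 + kl.2)) /
      ((kl.1 : ℂ) * (2 * (n : ℂ) + (kl.1 : ℂ) + (kl.2 : ℂ)))
  else 0

/-- `S₄(n,q) = Σ C_k C_l C_{−k−l} / ((2n+k)(2n+k+l))`. -/
noncomputable def S4sum (q : ℝ → ℂ) (n : ℕ) : ℂ :=
  ∑' kl : ℤ × ℤ, if Sadm n kl then
    cosCoef q kl.1 * cosCoef q kl.2 * cosCoef q (-(kl.1 + kl.2)) /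
      ((2 * (n : ℂ) + (kl.1 : ℂ)) * (2 * (n : ℂ) + (kl.1 : ℂ) + (kl.2 : ℂ)))
  else 0

/-- reciprocal of absolute value, zero at zero -/
noncomputable def gg (j : ℤ) : ℝ := |(j : ℝ)|⁻¹

/-- the sum of `|j|^(-3/2)` -/
noncomputable def hh (j : ℤ) : ℝ := |(j : ℝ)| ^ (-(3/2) : ℝ)

lemma gg_nonneg (j : ℤ) : 0 ≤ gg j := by unfold gg; positivity

lemma hh_nonneg (j : ℤ) : 0 ≤ hh j := by unfold hh; positivity

lemma gg_le_one (j : ℤ) : gg j ≤ 1 := by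
  unfold gg
  by_cases h : j = 0
  · simp [h]
  · apply inv_le_one_of_one_le₀
    exact_mod_cast Int.one_le_abs h

lemma hh_summable : Summable hh := Real.summable_abs_int_rpow (by norm_num)

lemma gg_hh (j : ℤ) : ∃ s : ℝ, 0 ≤ s ∧ s ^ 2 = gg j ∧ s ^ 3 = hh j := by
  refine ⟨|(j : ℝ)| ^ (-(1/2) : ℝ), by positivity, ?_, ?_⟩
  · rw [← Real.rpow_natCast, ← Real.rpow_mul (abs_nonneg _), gg, ← Real.rpow_neg_one]
    norm_num
  · rw [← Real.rpow_natCast, ← Real.rpow_mul (abs_nonneg _), hh]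
    norm_num

lemma amgm3 (x y z : ℝ) (hx : 0 ≤ x) (hy : 0 ≤ y) (hz : 0 ≤ z) :
    x * y * z ≤ x ^ 3 + y ^ 3 + z ^ 3 := by
  have h3 : 0 ≤ x * y * z := by positivity
  nlinarith [mul_nonneg hx (sq_nonneg (y - z)), mul_nonneg hy (sq_nonneg (y - z)),
    mul_nonneg hz (sq_nonneg (y - z)), mul_nonneg hx (sq_nonneg (x - z)),
    mul_nonneg hy (sq_nonneg (x - z)), mul_nonneg hz (sq_nonneg (x - z)),
    mul_nonneg hx (sq_nonneg (x - y)), mul_nonneg hy (sq_nonneg (x - y)),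
    mul_nonneg hz (sq_nonneg (x - y))]

lemma ggg_le (i j k : ℤ) : gg i * gg j * gg k ≤ hh i * hh j + hh j * hh k + hh i * hh k := by
  obtain ⟨a, ha, ha2, ha3⟩ := gg_hh i
  obtain ⟨b, hb, hb2, hb3⟩ := gg_hh j
  obtain ⟨c, hc, hc2, hc3⟩ := gg_hh k
  rw [← ha2, ← hb2, ← hc2, ← ha3, ← hb3, ← hc3]
  have := amgm3 (a * b) (b * c) (a * c) (by positivity) (by positivity) (by positivity)
  nlinarith [this]

/-- the total of `hh` -/
noncomputable def HH : ℝ := ∑' j, hh j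

lemma hh_prod : HasSum (fun p : ℤ × ℤ => hh p.1 * hh p.2) (HH * HH) :=
  HasSum.mul hh_summable.hasSum hh_summable.hasSum
    (hh_summable.mul_of_nonneg hh_summable hh_nonneg hh_nonneg)

/-- majorant -/
noncomputable def BB (a b : ℤ) (p : ℤ × ℤ) : ℝ :=
  hh (p.1 + a) * hh p.2 + hh p.2 * hh (p.1 + p.2 + b) + hh (p.1 + a) * hh (p.1 + p.2 + b)

/-- first shear -/
def e1 (a : ℤ) : ℤ × ℤ ≃ ℤ × ℤ where
  toFun p := (p.1 + a, p.2)
  invFun p := (p.1 - a, p.2)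
  left_inv p := by ext <;> simp <;> ring
  right_inv p := by ext <;> simp <;> ring

/-- second shear -/
def e2 (b : ℤ) : ℤ × ℤ ≃ ℤ × ℤ where
  toFun p := (p.2, p.1 + p.2 + b)
  invFun p := (p.2 - p.1 - b, p.1)
  left_inv p := by ext <;> simp <;> ring
  right_inv p := by ext <;> simp <;> ring

/-- third shear -/
def e3 (a b : ℤ) : ℤ × ℤ ≃ ℤ × ℤ where
  toFun p := (p.1 + a, p.1 + p.2 + b)
  invFun p := (p.1 - a, p.2 - b - (p.1 - a))
  left_inv p := by ext <;> simp <;> ring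
  right_inv p := by ext <;> simp <;> ring

lemma BB_hasSum (a b : ℤ) : HasSum (BB a b) (HH * HH + HH * HH + HH * HH) :=
  (((e1 a).hasSum_iff.mpr hh_prod).add ((e2 b).hasSum_iff.mpr hh_prod)).add
    ((e3 a b).hasSum_iff.mpr hh_prod)

lemma gg_split (n : ℕ) (hn : 0 < n) (k : ℤ) :
    gg k * gg (k + 2 * n) ≤ (1 / (n : ℝ)) * (gg k + gg (k + 2 * n)) := by
  by_cases h1 : k = 0
  · have : gg k = 0 := by simp [gg, h1]
    rw [this, zero_mul]
    have := gg_nonneg (k + 2 * n)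
    positivity
  by_cases h2 : k + 2 * n = 0
  · have : gg (k + 2 * n) = 0 := by simp [gg, h2]
    rw [this, mul_zero]
    have := gg_nonneg k
    positivity
  have hn' : (0 : ℝ) < n := by exact_mod_cast hn
  have p1 : 0 < |(k : ℝ)| := by rw [abs_pos]; exact_mod_cast h1
  have p2 : 0 < |((k + 2 * n : ℤ) : ℝ)| := by rw [abs_pos]; exact_mod_cast h2
  have key : (n : ℝ) ≤ |(k : ℝ)| + |((k + 2 * n : ℤ) : ℝ)| := by
    push_cast
    have a1 := neg_abs_le (k : ℝ)
    have a2 := le_abs_self ((k : ℝ) + 2 * n)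
    have a3 := le_abs_self (k : ℝ)
    linarith
  unfold gg
  rw [show |(k : ℝ)|⁻¹ + |((k + 2 * n : ℤ) : ℝ)|⁻¹ =
    (|(k : ℝ)| + |((k + 2 * n : ℤ) : ℝ)|) * (|(k : ℝ)|⁻¹ * |((k + 2 * n : ℤ) : ℝ)|⁻¹) by
      field_simp; ring, ← mul_assoc]
  apply le_mul_of_one_le_left (by positivity)
  rw [one_div, ← div_eq_inv_mul, one_le_div hn']
  exact key

lemma cosCoef_neg' (q : ℝ → ℂ) (k : ℤ) : cosCoef q (-k) = cosCoef q k := by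
  simp [cosCoef]

lemma cosCoef_bound (q : ℝ → ℂ) (hC0 : cosCoef q 0 = 0)
    (hE : (fun n : ℕ => cosCoef q (n : ℤ)) =O[atTop] fun n : ℕ => (1 : ℝ) / n) :
    ∃ M : ℝ, 0 ≤ M ∧ ∀ k : ℤ, ‖cosCoef q k‖ ≤ M * gg k := by
  rw [isBigO_nat_atTop_iff] at hE
  · obtain ⟨C, hC⟩ := hE
    refine ⟨|C|, abs_nonneg _, fun k => ?_⟩
    have main : ∀ n : ℕ, ‖cosCoef q (n : ℤ)‖ ≤ |C| * gg n := by
      intro n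
      refine (hC n).trans ?_
      have : ‖(1 : ℝ) / n‖ = gg n := by simp [gg]
      rw [this]
      exact mul_le_mul_of_nonneg_right (le_abs_self C) (gg_nonneg _)
    obtain ⟨n, rfl | rfl⟩ := Int.eq_nat_or_neg k
    · exact main n
    · rw [cosCoef_neg']
      have : gg (-(n : ℤ)) = gg n := by simp [gg]
      rw [this]; exact main n
  · intro n hn
    have : n = 0 := by simpa using hn
    subst this
    simpa using hC0

lemma norm_inv_gg (j : ℤ) : ‖((j : ℂ))⁻¹‖ = gg j := by
  simp [gg]

lemma final_bound (f : ℕ → ℤ × ℤ → ℂ) (K : ℝ) (a b a' b' : ℕ → ℤ)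
    (hf : ∀ n : ℕ, 0 < n → ∀ p : ℤ × ℤ, ‖f n p‖ ≤ K * (1 / (n : ℝ)) *
      (gg (p.1 + a n) * gg p.2 * gg (p.1 + p.2 + b n) +
       gg (p.1 + a' n) * gg p.2 * gg (p.1 + p.2 + b' n))) (hK : 0 ≤ K) :
    (fun n : ℕ => ∑' p, f n p) =O[atTop] fun n : ℕ => 1 / (n : ℝ) := by
  refine IsBigO.of_bound (K * (2 * (HH * HH + HH * HH + HH * HH))) ?_
  filter_upwards [eventually_gt_atTop 0] with n hn
  have hs := ((BB_hasSum (a n) (b n)).add (BB_hasSum (a' n) (b' n))).mul_left (K * (1 / (n : ℝ)))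
  have := tsum_of_norm_bounded hs (f := f n) (fun p => (hf n hn p).trans ?_)
  · refine this.trans (le_of_eq ?_)
    rw [Real.norm_of_nonneg (by positivity)]
    ring
  · apply mul_le_mul_of_nonneg_left _ (by positivity)
    exact add_le_add (ggg_le _ _ _) (ggg_le _ _ _)

lemma triple_bound {q : ℝ → ℂ} {M : ℝ} (hM : 0 ≤ M) (h : ∀ k : ℤ, ‖cosCoef q k‖ ≤ M * gg k)
    (k l : ℤ) (u v : ℤ) (w : ℂ) (hw : w = (u : ℂ) * v) :
    ‖cosCoef q k * cosCoef q l * cosCoef q (-(k + l)) / w‖ ≤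
      M ^ 3 * (gg k * gg l * gg (k + l) * gg u * gg v) := by
  rw [hw, div_eq_mul_inv, mul_inv, norm_mul, norm_mul, norm_mul, norm_mul, norm_inv_gg,
    norm_inv_gg, cosCoef_neg']
  have h1 := gg_nonneg k
  have h2 := gg_nonneg l
  have h3 := gg_nonneg (k + l)
  have h4 := gg_nonneg u
  have h5 := gg_nonneg v
  calc _ ≤ (M * gg k) * (M * gg l) * (M * gg (k + l)) * (gg u * gg v) := by
        gcongr <;> exact h _
    _ = _ := by ring

lemma combine {x y z t : ℝ} (hxy : x ≤ y) (hx : 0 ≤ x) (hz : 0 ≤ z) (ht : 0 ≤ t) (ht1 : t ≤ 1) :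
    x * z * t ≤ y * z * 1 :=
  mul_le_mul (mul_le_mul_of_nonneg_right hxy hz) ht1 ht (mul_nonneg (hx.trans hxy) hz)

/-- If `q` belongs to the class `E` (i.e. `C_n = O(1/n)` and `C₀ = 0`),
then `S_j(n,q) = O(1/n)` as `n → ∞` for `j = 2, 3, 4`. -/
theorem stmt10 (q : ℝ → ℂ)
    (hint : IntervalIntegrable q volume 0 Real.pi)
    (hC0 : cosCoef q 0 = 0)
    (hE : (fun n : ℕ => cosCoef q (n : ℤ)) =O[atTop] fun n : ℕ => (1 : ℝ) / n) :
    ((fun n : ℕ => S2sum q n) =O[atTop] fun n : ℕ => 1 / (n : ℝ)) ∧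
    ((fun n : ℕ => S3sum q n) =O[atTop] fun n : ℕ => 1 / (n : ℝ)) ∧
    ((fun n : ℕ => S4sum q n) =O[atTop] fun n : ℕ => 1 / (n : ℝ)) := by
  obtain ⟨M, hM, hb⟩ := cosCoef_bound q hC0 hE
  have hM3 : 0 ≤ M ^ 3 := by positivity
  refine ⟨?_, ?_, ?_⟩
  · refine final_bound _ (M ^ 3) (fun _ => 0) (fun _ => 0) (fun n => 2 * n) (fun _ => 0) ?_ hM3
    rintro n hn ⟨k, l⟩
    have g1 := gg_nonneg k
    have g2 := gg_nonneg l
    have g3 := gg_nonneg (k + l)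
    have g4 := gg_nonneg (k + 2 * n)
    split_ifs with h
    · refine (triple_bound hM hb k l (k + 2 * n) (k + l) _ (by push_cast; ring)).trans ?_
      rw [mul_assoc (M ^ 3) (1 / (n : ℝ))]
      refine mul_le_mul_of_nonneg_left ?_ hM3
      simp only [add_zero]
      calc _ = (gg k * gg (k + 2 * n)) * (gg l * gg (k + l)) * gg (k + l) := by ring
        _ ≤ (1 / (n : ℝ) * (gg k + gg (k + 2 * n))) * (gg l * gg (k + l)) * 1 := by
          exact combine (gg_split n hn k) (by positivity) (by positivity) (gg_nonneg _) (gg_le_one _)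
        _ = _ := by ring
    · rw [norm_zero]
      simp only [add_zero]
      positivity
  · refine final_bound _ (M ^ 3) (fun _ => 0) (fun _ => 0) (fun _ => 0) (fun n => 2 * n) ?_ hM3
    rintro n hn ⟨k, l⟩
    have g1 := gg_nonneg k
    have g2 := gg_nonneg l
    have g3 := gg_nonneg (k + l)
    have g4 := gg_nonneg (k + l + 2 * n)
    split_ifs with h
    · refine (triple_bound hM hb k l k (k + l + 2 * n) _ (by push_cast; ring)).trans ?_
      rw [mul_assoc (M ^ 3) (1 / (n : ℝ))]
      refine mul_le_mul_of_nonneg_left ?_ hM3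
      simp only [add_zero]
      calc _ = (gg (k + l) * gg (k + l + 2 * n)) * (gg l * gg k) * gg k := by ring
        _ ≤ (1 / (n : ℝ) * (gg (k + l) + gg (k + l + 2 * n))) * (gg l * gg k) * 1 := by
          exact combine (gg_split n hn (k + l)) (by positivity) (by positivity) (gg_nonneg _) (gg_le_one _)
        _ = _ := by ring
    · rw [norm_zero]
      simp only [add_zero]
      positivity
  · refine final_bound _ (M ^ 3) (fun _ => 0) (fun _ => 0) (fun n => 2 * n) (fun _ => 0) ?_ hM3
    rintro n hn ⟨k, l⟩
    have g1 := gg_nonneg k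
    have g2 := gg_nonneg l
    have g3 := gg_nonneg (k + l)
    have g4 := gg_nonneg (k + 2 * n)
    have g5 := gg_nonneg (k + l + 2 * n)
    split_ifs with h
    · refine (triple_bound hM hb k l (k + 2 * n) (k + l + 2 * n) _ (by push_cast; ring)).trans ?_
      rw [mul_assoc (M ^ 3) (1 / (n : ℝ))]
      refine mul_le_mul_of_nonneg_left ?_ hM3
      simp only [add_zero]
      calc _ = (gg k * gg (k + 2 * n)) * (gg l * gg (k + l)) * gg (k + l + 2 * n) := by ring
        _ ≤ (1 / (n : ℝ) * (gg k + gg (k + 2 * n))) * (gg l * gg (k + l)) * 1 := by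
          exact combine (gg_split n hn k) (by positivity) (by positivity) (gg_nonneg _) (gg_le_one _)
        _ = _ := by ring
    · rw [norm_zero]
      simp only [add_zero]
      positivity
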